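/- Let F be a totally real number field of degree d over ℚ and let L be a number field Galois over ℚ with F ⊆ L. Let E be a field of characteristic 0 and let ρ be a representation of Gal(L/F) on a 2-dimensional E-vector space M. Let End⁰(M) = {T ∈ End_E(M) : tr T = 0} carry the Gal(L/F)-action T ↦ ρ(σ) ∘ T ∘ ρ(σ)⁻¹ (the trace-zero adjoint representation Ad⁰ρ). Assume: (i) (End⁰M)^{Gal(L/F)} = 0 (i.e. Ad⁰ρ contains no copy of the trivial representation, which holds when ρ is absolutely irreducible); and (ii) ρ is odd, i.e. for every embedding τ : L ↪ ℂ, the complex conjugation c_τ induced by τ (which lies in Gal(L/F) since F is totally real) satisfies tr ρ(c_τ) = 0. Then dim_E Hom_{E[Gal(L/F)]}(End⁰(M), 𝓞_L^× ⊗_ℤ E) = d. That is, the Stark unit group U_f of a parallel weight one Hilbert modular form has rank d = [F : ℚ]. -/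

import Mathlib

open NumberField TensorProduct

/-- The natural action of an automorphism `σ ∈ Gal(L/ℚ)` of a number field `L` on the unit
group of its ring of integers, written additively and `ℤ`-linearly. -/
noncomputable def galUnitsLinear (L : Type*) [Field L] [NumberField L] (σ : L ≃ₐ[ℚ] L) :
    Additive (𝓞 L)ˣ →ₗ[ℤ] Additive (𝓞 L)ˣ :=
  (MonoidHom.toAdditive
    (Units.map ((galRestrict ℤ ℚ L (𝓞 L) σ : (𝓞 L) ≃ₐ[ℤ] (𝓞 L)) : (𝓞 L) →* (𝓞 L)))).toIntLinearMap

/-- The induced (`E`-linear) Galois action on `𝓞_L^× ⊗_ℤ E`. -/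
noncomputable def galUnitsTensor (L : Type*) [Field L] [NumberField L]
    (E : Type*) [Field E] (σ : L ≃ₐ[ℚ] L) :
    (E ⊗[ℤ] Additive (𝓞 L)ˣ) →ₗ[E] (E ⊗[ℤ] Additive (𝓞 L)ˣ) :=
  LinearMap.baseChange E (galUnitsLinear L σ)

/-- Conjugation `T ↦ ρ(g) ∘ T ∘ ρ(g)⁻¹` on endomorphisms, as a linear map. -/
def conjEnd {E G M : Type*} [CommRing E] [Group G] [AddCommGroup M] [Module E M]
    (ρ : Representation E G M) (g : G) : (M →ₗ[E] M) →ₗ[E] (M →ₗ[E] M) where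
  toFun T := ρ g * T * ρ g⁻¹
  map_add' S T := by simp [mul_add, add_mul]
  map_smul' c T := by simp [mul_smul_comm, smul_mul_assoc]

/-- The trace-zero adjoint representation `Ad⁰ρ`: conjugation by `ρ(g)` restricted to the
space `End⁰(M)` of trace-zero endomorphisms. -/
noncomputable def adjointAct {E G M : Type*} [CommRing E] [Group G] [AddCommGroup M]
    [Module E M] (ρ : Representation E G M) (g : G) :
    (LinearMap.ker (LinearMap.trace E M)) →ₗ[E] (LinearMap.ker (LinearMap.trace E M)) :=
  (conjEnd ρ g).restrict (by
    intro T hT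
    simp only [LinearMap.mem_ker] at hT ⊢
    show LinearMap.trace E M (ρ g * T * ρ g⁻¹) = 0
    rw [LinearMap.trace_mul_comm E (ρ g * T) (ρ g⁻¹), ← mul_assoc, ← map_mul,
      inv_mul_cancel, map_one, one_mul]
    exact hT)

/-- The submodule of `G`-equivariant linear maps between two spaces equipped with linear
`G`-actions `ρ` and `ν`. -/
def equivariantHoms {E G M N : Type*} [CommSemiring E]
    [AddCommMonoid M] [Module E M] [AddCommMonoid N] [Module E N]
    (ρ : G → M →ₗ[E] M) (ν : G → N →ₗ[E] N) : Submodule E (M →ₗ[E] N) where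
  carrier := {φ | ∀ g : G, ∀ m : M, φ (ρ g m) = ν g (φ m)}
  add_mem' := by intro a b ha hb g m; simp [ha g m, hb g m]
  zero_mem' := by intro g m; simp
  smul_mem' := by intro c φ hφ g m; simp [hφ g m]

/-!
By Dirichlet's unit theorem the logarithmic embedding fits into a Galois-equivariant exact sequence
`0 → ℝ ⊗ 𝓞_L^× → ℝ^{w ∣ ∞} → ℝ → 0`, so at `σ` the character of `ℝ ⊗ 𝓞_L^×` is the number of
infinite places fixed by `σ`, minus one. This number is rational, hence `E ⊗ 𝓞_L^×` has the same
character for every field `E` of characteristic zero. Summing characters over `G = Gal(L/F)` gives,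
for every representation `V` of `G` with decomposition groups `G_w`,
`|G| (dim Hom_G(V, E ⊗ 𝓞_L^×) + dim V^G) = ∑_{w ∣ ∞} |G_w| dim V^{G_w}`.

If `ρ` is odd of dimension `n`, each `G_w` is `{1, c}` with `tr ρ(c) = 0`; the character of `Ad⁰ρ`
takes the values `n² - 1` and `-1` there, so that every term of the sum is `n² - 2`. There are
`|G| [F : ℚ] / 2` terms.
-/

section Trace

lemma trace_eq_add_of_exact {R A B C : Type*} [CommRing R]
    [AddCommGroup A] [Module R A] [Module.Free R A] [Module.Finite R A]
    [AddCommGroup B] [Module R B] [Module.Free R B] [Module.Finite R B]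
    [AddCommGroup C] [Module R C] [Module.Free R C] [Module.Finite R C]
    {i : A →ₗ[R] B} {p : B →ₗ[R] C} (hi : Function.Injective i) (hip : Function.Exact i p)
    (hp : Function.Surjective p) {f : A →ₗ[R] A} {g : B →ₗ[R] B} {h : C →ₗ[R] C}
    (hf : i ∘ₗ f = g ∘ₗ i) (hh : p ∘ₗ g = h ∘ₗ p) :
    LinearMap.trace R B g = LinearMap.trace R A f + LinearMap.trace R C h := by
  obtain ⟨s, hs⟩ := Module.projective_lifting_property p LinearMap.id hp
  obtain ⟨e, he_i, he_p⟩ := hip.splitSurjectiveEquiv hi ⟨s, hs⟩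
  let r : B →ₗ[R] A := LinearMap.fst R A C ∘ₗ e
  let t : C →ₗ[R] B := e.symm ∘ₗ LinearMap.inr R A C
  have hri : r ∘ₗ i = LinearMap.id := by ext a; simp [r, he_i]
  have hpt : p ∘ₗ t = LinearMap.id := by ext c; simp [t, he_p]
  have hsplit : i ∘ₗ r + t ∘ₗ p = LinearMap.id := by
    ext b
    apply e.injective
    simp [r, t, he_i, he_p]
  calc LinearMap.trace R B g
      = LinearMap.trace R B ((g ∘ₗ i) ∘ₗ r) + LinearMap.trace R B ((g ∘ₗ t) ∘ₗ p) := by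
        rw [← map_add, LinearMap.comp_assoc, LinearMap.comp_assoc, ← LinearMap.comp_add, hsplit,
          LinearMap.comp_id]
    _ = LinearMap.trace R A (r ∘ₗ g ∘ₗ i) + LinearMap.trace R C (p ∘ₗ g ∘ₗ t) :=
        congr_arg₂ (· + ·) (LinearMap.trace_comp_comm' _ _) (LinearMap.trace_comp_comm' _ _)
    _ = LinearMap.trace R A f + LinearMap.trace R C h := by
        rw [← hf, ← LinearMap.comp_assoc f, hri, ← LinearMap.comp_assoc t, hh,
          LinearMap.comp_assoc t, hpt, LinearMap.id_comp, LinearMap.comp_id]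

lemma trace_funLeft {R X : Type*} [CommRing R] [Finite X] (f : X → X) :
    LinearMap.trace R (X → R) (LinearMap.funLeft R R f) = Nat.card (Function.fixedPoints f) := by
  classical
  have := Fintype.ofFinite X
  rw [LinearMap.trace_eq_matrix_trace R (Pi.basisFun R X), Matrix.trace, Nat.card_eq_fintype_card,
    Fintype.card_subtype]
  simp [LinearMap.funLeft_apply, Pi.single_apply, Function.IsFixedPt]

lemma trace_surjective (R M : Type*) [CommRing R] [AddCommGroup M] [Module R M]
    [Module.Free R M] [Module.Finite R M] [Nontrivial M] :
    Function.Surjective (LinearMap.trace R M) := by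
  intro a
  let b := Module.Free.chooseBasis R M
  obtain ⟨j⟩ := b.index_nonempty
  exact ⟨(b.coord j).smulRight (a • b j), by simp⟩

lemma trace_baseChange_baseChange {R k N : Type*} (K : Type*) [CommRing R] [Field k] [CommRing K]
    [Algebra R k] [Algebra R K] [Algebra k K] [IsScalarTower R k K] [AddCommGroup N] [Module R N]
    [Module.Finite R N] (f : N →ₗ[R] N) :
    LinearMap.trace K _ (f.baseChange K) =
      algebraMap k K (LinearMap.trace k _ (f.baseChange k)) := by
  rw [← LinearMap.trace_baseChange,
    ← LinearMap.trace_conj' _ (AlgebraTensorModule.cancelBaseChange R k K K N)]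
  congr 1
  ext n
  simp [LinearEquiv.conj_apply_apply]

end Trace

section Character

variable {k G V : Type*} [Field k] [Group G] [AddCommGroup V] [Module k V]

lemma invariants_linHom {W : Type*} [AddCommGroup W] [Module k W] (π : Representation k G V)
    (ψ : Representation k G W) :
    (π.linHom ψ).invariants = equivariantHoms (fun g ↦ π g) (fun g ↦ ψ g) := by
  ext f
  refine (Representation.mem_linHom_invariants_iff_isIntertwining f).trans ?_
  exact ⟨fun h ↦ h.isIntertwining, fun h ↦ ⟨h⟩⟩

variable [CharZero k] [FiniteDimensional k V]

lemma sum_character [Fintype G] (π : Representation k G V) :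
    ∑ g, π.character g = Nat.card G * Module.finrank k π.invariants := by
  have hG : (Nat.card G : k) ≠ 0 := Nat.cast_ne_zero.2 Nat.card_pos.ne'
  have := invertibleOfNonzero hG
  rw [← π.card_inv_mul_sum_char_eq_finrank, mul_inv_cancel_left₀ hG]

lemma sum_card_fixedBy_mul_character [Fintype G] {X : Type*} [Fintype X] [MulAction G X]
    (π : Representation k G V) :
    ∑ g, Nat.card (MulAction.fixedBy X g) * π.character g =
      ∑ x : X, Nat.card (MulAction.stabilizer G x) *
        (Module.finrank k
          (Representation.invariants (π.comp (MulAction.stabilizer G x).subtype)) : k) := by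
  classical
  calc ∑ g, Nat.card (MulAction.fixedBy X g) * π.character g
      = ∑ g, ∑ x : X, if g • x = x then π.character g else 0 := by
        simp_rw [← Finset.sum_filter, Finset.sum_const, nsmul_eq_mul, Nat.card_eq_fintype_card,
          Fintype.card_subtype, MulAction.mem_fixedBy]
    _ = ∑ x : X, ∑ g : MulAction.stabilizer G x, π.character g := by
        rw [Finset.sum_comm]
        simp_rw [← Finset.sum_filter]
        exact Finset.sum_congr rfl fun x _ ↦ Finset.sum_subtype _ (by simp) _
    _ = _ := Finset.sum_congr rfl fun x _ ↦
        sum_character (π.comp (MulAction.stabilizer G x).subtype)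

end Character

section Adjoint

variable {E G M : Type*} [Field E] [Group G] [AddCommGroup M] [Module E M]

/-- The trace-zero adjoint representation `Ad⁰ρ`: the actions `adjointAct ρ g`, bundled as a
`Representation`. -/
noncomputable def adjointRep (ρ : Representation E G M) :
    Representation E G (LinearMap.ker (LinearMap.trace E M)) where
  toFun := adjointAct ρ
  map_one' := by
    ext T : 2
    simp [adjointAct, conjEnd]
  map_mul' g h := by
    ext T : 2
    simp [adjointAct, conjEnd, mul_assoc]

variable [FiniteDimensional E M]

lemma trace_conjEnd (ρ : Representation E G M) (g : G) :
    LinearMap.trace E _ (conjEnd ρ g) = ρ.character g⁻¹ * ρ.character g :=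
  Representation.char_linHom ρ ρ g

lemma character_adjointRep [Nontrivial M] (ρ : Representation E G M) (g : G) :
    (adjointRep ρ).character g = ρ.character g⁻¹ * ρ.character g - 1 := by
  have htrace : LinearMap.trace E M ∘ₗ conjEnd ρ g = LinearMap.id ∘ₗ LinearMap.trace E M := by
    ext T
    change LinearMap.trace E M (ρ g * T * ρ g⁻¹) = LinearMap.trace E M T
    rw [LinearMap.trace_mul_cycle, ← map_mul, inv_mul_cancel, map_one, one_mul]
  have h := trace_eq_add_of_exact (Submodule.injective_subtype _)
    (LinearMap.exact_subtype_ker_map (LinearMap.trace E M)) (trace_surjective E M)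
    (f := adjointAct ρ g) rfl htrace
  rw [trace_conjEnd, LinearMap.trace_id, Module.finrank_self, Nat.cast_one] at h
  exact eq_sub_of_add_eq h.symm

lemma natCard_mul_finrank_invariants_adjointRep_add_two [CharZero E] [Nontrivial M]
    (ρ : Representation E G M) {H : Subgroup G} {c : G} (hH : (H : Set G) = {1, c})
    (hc : ρ.character c = 0) :
    Nat.card H * Module.finrank E (Representation.invariants ((adjointRep ρ).comp H.subtype)) + 2 =
      Module.finrank E M ^ 2 := by
  classical
  have hc1 : 1 ≠ c := by
    rintro rfl
    simp [Module.finrank_pos.ne'] at hc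
  have : Fintype H := @Fintype.ofFinite _ (hH ▸ Set.toFinite {1, c} : (H : Set G).Finite)
  have hsum : ∑ h : H, (adjointRep ρ).character h + 2 = (Module.finrank E M : E) ^ 2 := by
    rw [← Finset.sum_subtype {1, c} (fun g ↦ by simp [← SetLike.mem_coe, hH])
      (adjointRep ρ).character, Finset.sum_pair hc1, character_adjointRep, character_adjointRep,
      hc, inv_one, Representation.char_one]
    ring
  have hcard := sum_character ((adjointRep ρ).comp H.subtype)
  exact_mod_cast (congr_arg (· + 2) hcard.symm).trans hsum

end Adjoint

section Units

lemma mult_smul_infinitePlace {k K : Type*} [Field k] [Field K] [Algebra k K] (σ : K ≃ₐ[k] K)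
    (w : InfinitePlace K) : (σ • w).mult = w.mult := by
  classical
  rw [InfinitePlace.mult, InfinitePlace.mult, if_congr InfinitePlace.isReal_smul_iff rfl rfl]

variable (L : Type*) [Field L]

/-- The logarithmic embedding `u ↦ (‖u‖_w)_w`, `‖u‖_w = mult w * log |u|_w`, of the units of `𝓞_L`,
extended `ℝ`-linearly to `ℝ ⊗ 𝓞_L^×`. Unlike `NumberField.Units.logEmbedding` no place is left out,
so that it is equivariant for the permutation action on the places. -/
noncomputable def realLogEmbedding :
    (ℝ ⊗[ℤ] Additive (𝓞 L)ˣ) →ₗ[ℝ] (InfinitePlace L → ℝ) :=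
  LinearMap.liftBaseChange ℝ <| AddMonoidHom.toIntLinearMap
    { toFun := fun u w ↦ w.mult * Real.log (w (u.toMul : L))
      map_zero' := by ext w; simp
      map_add' := fun u v ↦ by ext w; simp [Real.log_mul, mul_add] }

variable {L}

lemma realLogEmbedding_one_tmul (u : Additive (𝓞 L)ˣ) (w : InfinitePlace L) :
    realLogEmbedding L (1 ⊗ₜ u) w = w.mult * Real.log (w (u.toMul : L)) := by
  simp [realLogEmbedding]

variable [NumberField L]

lemma realLogEmbedding_comp_galUnitsTensor (σ : L ≃ₐ[ℚ] L) :
    realLogEmbedding L ∘ₗ galUnitsTensor L ℝ σ =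
      LinearMap.funLeft ℝ ℝ (σ⁻¹ • ·) ∘ₗ realLogEmbedding L := by
  ext u w
  have hσ : ((galUnitsLinear L σ u).toMul : L) = σ (u.toMul : L) :=
    algebraMap_galRestrict_apply ℤ σ _
  change realLogEmbedding L (1 ⊗ₜ galUnitsLinear L σ u) w = realLogEmbedding L (1 ⊗ₜ u) (σ⁻¹ • w)
  rw [realLogEmbedding_one_tmul, realLogEmbedding_one_tmul, hσ, mult_smul_infinitePlace]
  rfl

lemma sum_realLogEmbedding (x : ℝ ⊗[ℤ] Additive (𝓞 L)ˣ) : ∑ w, realLogEmbedding L x w = 0 := by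
  induction x with
  | zero => simp
  | add x y hx hy => simp [Finset.sum_add_distrib, hx, hy]
  | tmul r u =>
    rw [← mul_one r, ← smul_eq_mul, ← smul_tmul']
    simp [realLogEmbedding_one_tmul, ← Finset.mul_sum, Units.sum_mult_mul_log]

open Units.dirichletUnitTheorem

variable (L)

/-- Forgetting the coordinate at the distinguished place `w₀` omitted by
`NumberField.Units.logEmbedding`. -/
noncomputable def restrictLogSpace : (InfinitePlace L → ℝ) →ₗ[ℝ] logSpace L :=
  LinearMap.funLeft ℝ ℝ Subtype.val

lemma surjective_restrictLogSpace_comp_realLogEmbedding :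
    Function.Surjective (restrictLogSpace L ∘ₗ realLogEmbedding L) := by
  rw [← LinearMap.range_eq_top, eq_top_iff, ← unitLattice_span_eq_top, Submodule.span_le]
  rintro _ ⟨u, -, rfl⟩
  exact ⟨1 ⊗ₜ u, funext fun w ↦ realLogEmbedding_one_tmul u w⟩

lemma finrank_real_tensor_units :
    Module.finrank ℝ (ℝ ⊗[ℤ] Additive (𝓞 L)ˣ) = Units.rank L := by
  rw [(TensorProduct.isBaseChange ℤ (Additive (𝓞 L)ˣ) ℝ).finrank_eq, Units.finrank_eq]

lemma realLogEmbedding_injective : Function.Injective (realLogEmbedding L) := by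
  have h := (LinearMap.injective_iff_surjective_of_finrank_eq_finrank
    ((finrank_real_tensor_units L).trans (Units.finrank_eq_rank L).symm)).2
    (surjective_restrictLogSpace_comp_realLogEmbedding L)
  exact Function.Injective.of_comp (f := restrictLogSpace L) (by simpa using h)

lemma exact_realLogEmbedding_sum :
    Function.Exact (realLogEmbedding L)
      (∑ w, LinearMap.proj w : (InfinitePlace L → ℝ) →ₗ[ℝ] ℝ) := by
  intro y
  refine ⟨fun hy ↦ ?_, ?_⟩
  · obtain ⟨x, hx⟩ :=
      surjective_restrictLogSpace_comp_realLogEmbedding L (restrictLogSpace L y)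
    have hne (w : InfinitePlace L) (hw : w ≠ w₀) : (realLogEmbedding L x - y) w = 0 :=
      sub_eq_zero.2 <| congr_fun hx ⟨w, hw⟩
    have hsum : ∑ w, (realLogEmbedding L x - y) w = 0 := by
      simpa [sum_realLogEmbedding] using hy
    have hw₀ : (realLogEmbedding L x - y) w₀ = 0 := by
      rwa [Finset.sum_eq_single w₀ (fun w _ ↦ hne w) (by simp)] at hsum
    refine ⟨x, sub_eq_zero.1 <| funext fun w ↦ ?_⟩
    by_cases hw : w = w₀
    · exact hw ▸ hw₀
    · exact hne w hw
  · rintro ⟨x, rfl⟩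
    simp [sum_realLogEmbedding]

variable {L}

lemma trace_galUnitsTensor_real (σ : L ≃ₐ[ℚ] L) :
    LinearMap.trace ℝ _ (galUnitsTensor L ℝ σ) =
      Nat.card (MulAction.fixedBy (InfinitePlace L) σ) - 1 := by
  have hsurj : Function.Surjective (∑ w, LinearMap.proj w : (InfinitePlace L → ℝ) →ₗ[ℝ] ℝ) := by
    classical
    exact fun r ↦ ⟨Pi.single w₀ r, by simp⟩
  have hsum : (∑ w, LinearMap.proj w : (InfinitePlace L → ℝ) →ₗ[ℝ] ℝ) ∘ₗ
      LinearMap.funLeft ℝ ℝ (σ⁻¹ • ·) = LinearMap.id ∘ₗ ∑ w, LinearMap.proj w := by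
    ext y
    simpa using Equiv.sum_comp (MulAction.toPerm σ⁻¹) y
  have h := trace_eq_add_of_exact (realLogEmbedding_injective L) (exact_realLogEmbedding_sum L)
    hsurj (realLogEmbedding_comp_galUnitsTensor σ) hsum
  rw [trace_funLeft, LinearMap.trace_id, Module.finrank_self, Nat.cast_one] at h
  rw [← MulAction.fixedBy_inv]
  exact eq_sub_of_add_eq h.symm

lemma trace_galUnitsTensor (E : Type*) [Field E] [CharZero E] (σ : L ≃ₐ[ℚ] L) :
    LinearMap.trace E _ (galUnitsTensor L E σ) =
      Nat.card (MulAction.fixedBy (InfinitePlace L) σ) - 1 := by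
  have hℚ : LinearMap.trace ℚ _ (galUnitsTensor L ℚ σ) =
      Nat.card (MulAction.fixedBy (InfinitePlace L) σ) - 1 := by
    have hℝ := trace_galUnitsTensor_real σ
    rw [galUnitsTensor, trace_baseChange_baseChange (k := ℚ)] at hℝ
    apply (algebraMap ℚ ℝ).injective
    simpa [galUnitsTensor] using hℝ
  rw [galUnitsTensor, trace_baseChange_baseChange (k := ℚ), ← galUnitsTensor, hℚ]
  simp

lemma galUnitsLinear_one : galUnitsLinear L 1 = LinearMap.id := by
  ext u : 1
  rw [galUnitsLinear, map_one]
  rfl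

lemma galUnitsLinear_mul (σ τ : L ≃ₐ[ℚ] L) :
    galUnitsLinear L (σ * τ) = galUnitsLinear L σ ∘ₗ galUnitsLinear L τ := by
  ext u : 1
  rw [galUnitsLinear, map_mul]
  rfl

variable (L) in
/-- The representation of `Gal(L/ℚ)` on `𝓞_L^× ⊗ E`: the actions `galUnitsTensor L E σ`, bundled
as a `Representation`. -/
noncomputable def galUnitsRep (E : Type*) [Field E] :
    Representation E (L ≃ₐ[ℚ] L) (E ⊗[ℤ] Additive (𝓞 L)ˣ) where
  toFun := galUnitsTensor L E
  map_one' := by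
    rw [galUnitsTensor, galUnitsLinear_one, LinearMap.baseChange_id]
    rfl
  map_mul' σ τ := by
    rw [galUnitsTensor, galUnitsLinear_mul, LinearMap.baseChange_comp]
    rfl

end Units

section Rank

variable {F L : Type*} [Field F] [Field L] [Algebra F L]

lemma exists_isConj_stabilizer_eq_pair [IsTotallyReal F] [IsTotallyComplex L] [IsGalois F L]
    (w : InfinitePlace L) :
    ∃ c : L ≃ₐ[F] L, ComplexEmbedding.IsConj w.embedding c ∧
      (MulAction.stabilizer (L ≃ₐ[F] L) w : Set (L ≃ₐ[F] L)) = {1, c} := by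
  have hw : InfinitePlace.IsRamified F (InfinitePlace.mk w.embedding) :=
    InfinitePlace.isRamified_iff.2
      ⟨IsTotallyComplex.isComplex _, IsTotallyReal.isReal _⟩
  obtain ⟨c, hc⟩ := InfinitePlace.exists_isConj_of_isRamified hw
  exact ⟨c, hc, by simpa using hc.coe_stabilizer_mk⟩

lemma two_mul_card_infinitePlace (K : Type*) [Field K] [NumberField K] [IsTotallyComplex K] :
    2 * Fintype.card (InfinitePlace K) = Module.finrank ℚ K := by
  rw [IsTotallyComplex.finrank, InfinitePlace.card_eq_nrRealPlaces_add_nrComplexPlaces,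
    IsTotallyComplex.nrRealPlaces_eq_zero, zero_add]

variable {E M : Type*} [Field E] [CharZero E] [AddCommGroup M] [Module E M]
  [FiniteDimensional E M]

lemma isTotallyComplex_of_character_isConj_eq_zero [Nontrivial M]
    {ρ : Representation E (L ≃ₐ[F] L) M}
    (hρ : ∀ (τ : L →+* ℂ) (c : L ≃ₐ[F] L), ComplexEmbedding.IsConj τ c → ρ.character c = 0) :
    IsTotallyComplex L := by
  refine ⟨fun w ↦ InfinitePlace.not_isReal_iff_isComplex.1 fun hw ↦ ?_⟩
  have := hρ w.embedding 1 (ComplexEmbedding.isConj_one_iff.2 (InfinitePlace.isReal_iff.1 hw))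
  simp [Module.finrank_pos.ne'] at this

variable [NumberField F] [NumberField L] [IsScalarTower ℚ F L]

lemma natCard_aut_mul_finrank_equivariantHoms_add_finrank_invariants
    (π : Representation E (L ≃ₐ[F] L) M) :
    Nat.card (L ≃ₐ[F] L) *
        (Module.finrank E (equivariantHoms (fun g ↦ π g)
            (fun g ↦ galUnitsTensor L E (g.restrictScalars ℚ))) +
          Module.finrank E π.invariants) =
      ∑ w : InfinitePlace L, Nat.card (MulAction.stabilizer (L ≃ₐ[F] L) w) *
        Module.finrank E
          (Representation.invariants (π.comp (MulAction.stabilizer (L ≃ₐ[F] L) w).subtype)) := by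
  have : FiniteDimensional F L := Module.Finite.of_restrictScalars_finite ℚ F L
  let υ : Representation E (L ≃ₐ[F] L) (E ⊗[ℤ] Additive (𝓞 L)ˣ) :=
    (galUnitsRep L E).comp (AlgEquiv.restrictScalarsHom ℚ)
  have hυ (g : L ≃ₐ[F] L) : υ.character g = Nat.card (MulAction.fixedBy (InfinitePlace L) g) - 1 :=
    trace_galUnitsTensor E (g.restrictScalars ℚ)
  have hHom : (Nat.card (L ≃ₐ[F] L) : E) * Module.finrank E (equivariantHoms (fun g ↦ π g)
      (fun g ↦ galUnitsTensor L E (g.restrictScalars ℚ))) =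
      ∑ g, π.character g⁻¹ * υ.character g := by
    simp_rw [← Representation.char_linHom]
    rw [sum_character, invariants_linHom]
    rfl
  suffices h : (Nat.card (L ≃ₐ[F] L) : E) * (Module.finrank E (equivariantHoms (fun g ↦ π g)
      (fun g ↦ galUnitsTensor L E (g.restrictScalars ℚ))) + Module.finrank E π.invariants) =
      ∑ g, Nat.card (MulAction.fixedBy (InfinitePlace L) g) * π.character g by
    rw [sum_card_fixedBy_mul_character] at h
    exact_mod_cast h
  rw [mul_add, hHom, ← sum_character, ← Equiv.sum_comp (Equiv.inv _) π.character,
    ← Finset.sum_add_distrib, ← Equiv.sum_comp (Equiv.inv _)]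
  refine Finset.sum_congr rfl fun g _ ↦ ?_
  rw [hυ, Equiv.inv_apply, MulAction.fixedBy_inv, inv_inv]
  ring

theorem stark_units_rank_eq_degree_general [IsTotallyReal F] [IsGalois F L] [Nontrivial M]
    (ρ : Representation E (L ≃ₐ[F] L) M)
    (hodd : ∀ (τ : L →+* ℂ) (c : L ≃ₐ[F] L), ComplexEmbedding.IsConj τ c → ρ.character c = 0) :
    2 * (Module.finrank E (equivariantHoms (fun g ↦ adjointAct ρ g)
          (fun g : L ≃ₐ[F] L ↦ galUnitsTensor L E (g.restrictScalars ℚ))) +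
        Module.finrank E (adjointRep ρ).invariants + Module.finrank ℚ F) =
      Module.finrank ℚ F * Module.finrank E M ^ 2 := by
  have := isTotallyComplex_of_character_isConj_eq_zero hodd
  have : FiniteDimensional F L := Module.Finite.of_restrictScalars_finite ℚ F L
  have hlocal (w : InfinitePlace L) :
      Nat.card (MulAction.stabilizer (L ≃ₐ[F] L) w) * Module.finrank E (Representation.invariants
        ((adjointRep ρ).comp (MulAction.stabilizer (L ≃ₐ[F] L) w).subtype)) + 2 =
      Module.finrank E M ^ 2 := by
    obtain ⟨c, hc, hstab⟩ := exists_isConj_stabilizer_eq_pair (F := F) w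
    exact natCard_mul_finrank_invariants_adjointRep_add_two ρ hstab (hodd _ c hc)
  have hrank : Nat.card (L ≃ₐ[F] L) *
      (Module.finrank E (equivariantHoms (fun g ↦ adjointAct ρ g)
          (fun g : L ≃ₐ[F] L ↦ galUnitsTensor L E (g.restrictScalars ℚ))) +
        Module.finrank E (adjointRep ρ).invariants) = _ :=
    natCard_aut_mul_finrank_equivariantHoms_add_finrank_invariants (adjointRep ρ)
  have hsum := Fintype.sum_congr _ _ hlocal
  simp only [Finset.sum_add_distrib, ← hrank, Finset.sum_const, Finset.card_univ,
    smul_eq_mul] at hsum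
  have hplaces : 2 * Fintype.card (InfinitePlace L) =
      Nat.card (L ≃ₐ[F] L) * Module.finrank ℚ F := by
    rw [two_mul_card_infinitePlace, IsGalois.card_aut_eq_finrank, mul_comm,
      Module.finrank_mul_finrank]
  apply Nat.eq_of_mul_eq_mul_left (Nat.card_pos (α := L ≃ₐ[F] L))
  linear_combination 2 * hsum + Module.finrank E M ^ 2 * hplaces + 2 * hplaces.symm

end Rank

lemma isTotallyReal_of_forall_im_eq_zero {F : Type*} [Field F]
    (hF : ∀ φ : F →+* ℂ, ∀ x : F, (φ x).im = 0) : IsTotallyReal F :=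
  ⟨fun w ↦ InfinitePlace.isReal_iff.2 <| ComplexEmbedding.isReal_iff.2 <|
    RingHom.ext fun x ↦ Complex.conj_eq_iff_im.2 (hF w.embedding x)⟩

/-- Let `F` be a totally real number field of degree `d` and `L ⊇ F` a
number field Galois over `ℚ`.  Let `E` be a field of characteristic zero and `ρ` a
representation of `Gal(L/F)` on a `2`-dimensional `E`-vector space `M` whose trace-zero
adjoint representation `Ad⁰ρ` on `End⁰(M)` contains no copy of the trivial representation,
and which is odd (every complex conjugation of `L`, which lies in `Gal(L/F)` as `F` is
totally real, has trace-zero image).  Then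
`dim_E Hom_{E[Gal(L/F)]}(End⁰(M), 𝓞_L^× ⊗_ℤ E) = d`: the Stark unit group of a parallel
weight one Hilbert modular form has rank `d = [F : ℚ]`. -/
theorem stark_units_rank_eq_degree
    (F : Type*) [Field F] [NumberField F]
    (L : Type*) [Field L] [NumberField L]
    [Algebra F L] [IsScalarTower ℚ F L] [IsGalois ℚ L]
    (hF : ∀ φ : F →+* ℂ, ∀ x : F, (φ x).im = 0)
    (E : Type*) [Field E] [CharZero E]
    (M : Type*) [AddCommGroup M] [Module E M] [FiniteDimensional E M]
    (hM : Module.finrank E M = 2)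
    (ρ : Representation E (L ≃ₐ[F] L) M)
    (htriv : ∀ T : LinearMap.ker (LinearMap.trace E M),
      (∀ g : L ≃ₐ[F] L, adjointAct ρ g T = T) → T = 0)
    (hodd : ∀ (τ : L →+* ℂ) (c : L ≃ₐ[F] L),
      (∀ x : L, τ (c x) = (starRingEnd ℂ) (τ x)) →
      LinearMap.trace E M (ρ c) = 0) :
    Module.finrank E
        (equivariantHoms (fun g : L ≃ₐ[F] L => adjointAct ρ g)
          (fun g : L ≃ₐ[F] L => galUnitsTensor L E (g.restrictScalars ℚ))) =
      Module.finrank ℚ F := by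
  have := isTotallyReal_of_forall_im_eq_zero hF
  have : IsGalois F L := IsGalois.tower_top_of_isGalois ℚ F L
  have : Nontrivial M := Module.nontrivial_of_finrank_pos (R := E) (by omega)
  have hinvariants : (adjointRep ρ).invariants = ⊥ := (Submodule.eq_bot_iff _).2 htriv
  have hrank := stark_units_rank_eq_degree_general ρ fun τ c hc ↦
    hodd τ c fun x ↦ (RingHom.congr_fun hc x).symm
  rw [hinvariants, finrank_bot, hM] at hrank
  omega
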